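/- For every integer n > 2^4 = 16, every positive integer N, and every n-linear form U : (ℂ^N)^n → ℂ, one has (∑_{i₁,…,iₙ=1}^N |U(e_{i₁},…,e_{iₙ})|^{2n/(n+1)})^{(n+1)/(2n)} ≤ 1.01089344604 · (n-1)^{0.304975} · ‖U‖. -/

import Mathlib

open Real

/-- The Bohnenblust--Hille quantity of an `n`-linear form on `ℓ_∞^N` over `ℂ`:
`(∑_{i₁,…,iₙ} |U(e_{i₁},…,e_{iₙ})|^{2n/(n+1)})^{(n+1)/(2n)}`. -/
noncomputable def BHcomplex (n N : ℕ)
    (U : ContinuousMultilinearMap ℂ (fun _ : Fin n => (Fin N → ℂ)) ℂ) : ℝ :=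
  (∑ i : Fin n → Fin N,
      ‖U (fun k => Pi.single (i k) (1 : ℂ))‖ ^ ((2 * n : ℝ) / (n + 1)))
    ^ ((n + 1 : ℝ) / (2 * n))

/-!
Blei's interpolation of mixed norms, a consequence of the inequalities of Hölder and Minkowski,
bounds the `ℓ_{2(n+1)/(n+2)}` norm of the coefficients of an `(n + 1)`-linear form by the mixed
norms that are `ℓ_2` in one index and `ℓ_p`, `p = 2n/(n+1)`, in the others. Khinchine's inequality
in the `ℓ_2` index turns each mixed norm into an average of Bohnenblust–Hille quantities of the
`n`-linear forms obtained by fixing one argument to be a vector of roots of unity, so passing from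
`n` to `n + 1` costs a factor `A_p`, the Khinchine constant.

Sums of independent `q`-th roots of unity with `q ≥ 5` have the same moments up to order `8` as
Steinhaus sums. Bounding `√t` from below and `t log t` from above by polynomials of degree `4` in
`t = |∑ b_l ζ_l|²` therefore controls the expectation of `√t` and the entropy of `t`; the former
gives `A_1 ≤ 2^{1/3}`, and the latter, by Jensen's inequality, `A_p ≤ exp(0.521 (1/p - 1/2))`,
which is `exp(0.2605/n)`. Finally `exp(a/n) ≤ (n/(n-1))^a`, so the product of these factors is
dominated by a telescoping one.
-/

open Finset Function
open scoped NNReal ENNReal BigOperators ComplexConjugate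

section MixedNorms

variable {X : Type*} [Fintype X]

theorem sum_prod_rpow_le_prod_sum_rpow {J : Type*} [Fintype J] {θ : J → ℝ} (hθ : ∀ j, 0 ≤ θ j)
    (hθ_sum : ∑ j, θ j = 1) (u : J → X → ℝ≥0) :
    ∑ x, ∏ j, u j x ^ θ j ≤ ∏ j, (∑ x, u j x) ^ θ j := by
  let _ : MeasurableSpace X := ⊤
  have holder := ENNReal.lintegral_prod_norm_pow_le (μ := MeasureTheory.Measure.count) univ
    (f := fun j x => (u j x : ℝ≥0∞)) (fun _ _ => (measurable_of_finite _).aemeasurable) hθ_sum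
    (fun j _ => hθ j)
  simp only [MeasureTheory.lintegral_count, tsum_fintype] at holder
  rw [← ENNReal.coe_le_coe]
  simpa [ENNReal.ofNNReal_finsetSum, ENNReal.ofNNReal_finsetProd,
    ENNReal.coe_rpow_of_nonneg _ (hθ _)] using holder

theorem lp_sum_le_sum_lp {I : Type*} [Fintype I] {p : ℝ} (hp : 1 ≤ p) (v : I → X → ℝ≥0) :
    (∑ x, (∑ i, v i x) ^ p) ^ (1 / p) ≤ ∑ i, (∑ x, v i x ^ p) ^ (1 / p) := by
  have hp0 : p ≠ 0 := by positivity
  have minkowski := le_sum_of_subadditive (fun w : X → ℝ≥0 => (∑ x, w x ^ p) ^ (1 / p))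
    (by simp [hp0]) (fun v w => NNReal.Lp_add_le univ v w hp) univ v
  simpa only [Finset.sum_apply] using minkowski

theorem sum_pi_fin_succ {M : Type*} [AddCommMonoid M] {r : ℕ} (g : (Fin (r + 1) → X) → M) :
    ∑ i, g i = ∑ x, ∑ i, g (Fin.cons x i) := by
  rw [← (Fin.consEquiv fun _ => X).sum_comp, Fintype.sum_prod_type]
  rfl

/-- The mixed `ℓ_{q 0}(ℓ_{q 1}(⋯))` norm of a finite array, with coordinate `0` outermost. -/
noncomputable def mixedNorm : (r : ℕ) → (Fin r → ℝ) → ((Fin r → X) → ℝ≥0) → ℝ≥0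
  | 0, _, f => f Fin.elim0
  | r + 1, q, f =>
    (∑ x, mixedNorm r (fun c => q c.succ) (fun i => f (Fin.cons x i)) ^ q 0) ^ (1 / q 0)

theorem rpow_rpow_one_div {p : ℝ} (hp : p ≠ 0) (a : ℝ≥0) : (a ^ p) ^ (1 / p) = a := by
  rw [one_div, NNReal.rpow_rpow_inv hp]

theorem rpow_one_div_rpow {p : ℝ} (hp : p ≠ 0) (a : ℝ≥0) : (a ^ (1 / p)) ^ p = a := by
  rw [one_div, NNReal.rpow_inv_rpow hp]

theorem mixedNorm_const {p : ℝ} (hp : p ≠ 0) {r : ℕ} (f : (Fin r → X) → ℝ≥0) :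
    mixedNorm r (fun _ => p) f = (∑ i, f i ^ p) ^ (1 / p) := by
  induction r with
  | zero =>
    rw [Fintype.sum_unique, rpow_rpow_one_div hp]
    exact congrArg f (Subsingleton.elim _ _)
  | succ r ih => simp only [mixedNorm, ih, sum_pi_fin_succ, rpow_one_div_rpow hp]

theorem mixedNorm_prod_rpow_le {J : Type*} [Fintype J] {θ : J → ℝ} (hθ : ∀ j, 0 ≤ θ j) {r : ℕ}
    {ρ : Fin r → ℝ} (hρ : ∀ c, 0 < ρ c) {q : J → Fin r → ℝ} (hq : ∀ j c, 0 < q j c)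
    (hqρ : ∀ c, ∑ j, θ j / q j c = 1 / ρ c) (f : J → (Fin r → X) → ℝ≥0) :
    mixedNorm r ρ (fun i => ∏ j, f j i ^ θ j) ≤ ∏ j, mixedNorm r (q j) (f j) ^ θ j := by
  induction r with
  | zero => simp [mixedNorm]
  | succ r ih =>
    have hρ0 := hρ 0
    have hq0 : ∀ j, 0 < q j 0 := fun j => hq j 0
    let inner (j : J) (x : X) : ℝ≥0 :=
      mixedNorm r (fun c => q j c.succ) (fun i => f j (Fin.cons x i))
    have weights_sum : ∑ j, θ j * ρ 0 / q j 0 = 1 := by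
      simp_rw [mul_div_right_comm, ← sum_mul, hqρ 0]
      exact one_div_mul_cancel hρ0.ne'
    calc mixedNorm (r + 1) ρ (fun i => ∏ j, f j i ^ θ j)
        ≤ (∑ x, (∏ j, inner j x ^ θ j) ^ ρ 0) ^ (1 / ρ 0) := by
          rw [mixedNorm]
          gcongr with x
          exact ih (fun c => hρ c.succ) (fun j c => hq j c.succ) (fun c => hqρ c.succ)
            (fun j i => f j (Fin.cons x i))
      _ = (∑ x, ∏ j, (inner j x ^ q j 0) ^ (θ j * ρ 0 / q j 0)) ^ (1 / ρ 0) := by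
          congr! 3 with x
          rw [← NNReal.finsetProd_rpow]
          congr! 1 with j
          rw [← NNReal.rpow_mul, ← NNReal.rpow_mul, mul_div_cancel₀ _ (hq0 j).ne']
      _ ≤ (∏ j, (∑ x, inner j x ^ q j 0) ^ (θ j * ρ 0 / q j 0)) ^ (1 / ρ 0) := by
          gcongr
          refine sum_prod_rpow_le_prod_sum_rpow (fun j => ?_) weights_sum _
          exact div_nonneg (mul_nonneg (hθ j) hρ0.le) (hq0 j).le
      _ = ∏ j, mixedNorm (r + 1) (q j) (f j) ^ θ j := by
          rw [← NNReal.finsetProd_rpow]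
          congr! 1 with j
          rw [mixedNorm, ← NNReal.rpow_mul, ← NNReal.rpow_mul]
          congr 1
          have := (hq0 j).ne'
          field_simp

theorem mixedNorm_update_zero_le {p s : ℝ} (hp : 0 < p) (hps : p ≤ s) {n : ℕ}
    (f : (Fin (n + 1) → X) → ℝ≥0) :
    mixedNorm (n + 1) (update (fun _ => p) 0 s) f ≤
      (∑ i : Fin n → X, (∑ l, f (Fin.cons l i) ^ s) ^ (p / s)) ^ (1 / p) := by
  have hs : s ≠ 0 := (hp.trans_le hps).ne'
  have minkowski := lp_sum_le_sum_lp ((one_le_div hp).2 hps)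
    (fun (i : Fin n → X) (l : X) => f (Fin.cons l i) ^ p)
  simp only [one_div_div, ← NNReal.rpow_mul, mul_div_cancel₀ s hp.ne'] at minkowski
  calc mixedNorm (n + 1) (update (fun _ => p) 0 s) f
      = ((∑ l, (∑ i : Fin n → X, f (Fin.cons l i) ^ p) ^ (s / p)) ^ (p / s)) ^ (1 / p) := by
        simp only [mixedNorm, update_self, update_of_ne (Fin.succ_ne_zero _),
          mixedNorm_const hp.ne', ← NNReal.rpow_mul, one_div_mul_eq_div]
        congr 1
        field_simp
    _ ≤ _ := by gcongr

theorem mixedNorm_update_le {p s : ℝ} (hp : 0 < p) (hps : p ≤ s) {n : ℕ} (j : Fin (n + 1))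
    (f : (Fin (n + 1) → X) → ℝ≥0) :
    mixedNorm (n + 1) (update (fun _ => p) j s) f ≤
      (∑ i : Fin n → X, (∑ l, f (j.insertNth l i) ^ s) ^ (p / s)) ^ (1 / p) := by
  induction n with
  | zero =>
    obtain rfl := Fin.fin_one_eq_zero j
    simpa only [Fin.insertNth_zero'] using mixedNorm_update_zero_le hp hps f
  | succ n ih =>
    cases j using Fin.cases with
    | zero => simpa only [Fin.insertNth_zero'] using mixedNorm_update_zero_le hp hps f
    | succ j =>
      have tail_exponents : (fun c : Fin (n + 1) => update (fun _ => p) j.succ s c.succ) =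
          update (fun _ => p) j s :=
        update_comp_eq_of_injective _ (Fin.succ_injective _) j s
      rw [mixedNorm, tail_exponents, update_of_ne (Fin.succ_ne_zero j).symm, sum_pi_fin_succ]
      gcongr with x
      refine (NNReal.rpow_le_rpow (ih j _) hp.le).trans_eq ?_
      simp only [rpow_one_div_rpow hp.ne', Fin.insertNth_succ_cons]

theorem prod_const_rpow_one_div {n : ℕ} (a : ℝ≥0) :
    ∏ _j : Fin (n + 1), a ^ (1 / (n + 1) : ℝ) = a := by
  rw [prod_const, card_univ, Fintype.card_fin, ← Nat.cast_succ, one_div,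
    NNReal.rpow_inv_natCast_pow _ n.succ_ne_zero]

theorem lp_le_prod_mixed_lp {n : ℕ} {p s ρ : ℝ} (hp : 0 < p) (hps : p ≤ s)
    (hρ : (n + 1) / ρ = 1 / s + n / p) (f : (Fin (n + 1) → X) → ℝ≥0) :
    (∑ i, f i ^ ρ) ^ (1 / ρ) ≤ ∏ j : Fin (n + 1),
      ((∑ i : Fin n → X, (∑ l, f (j.insertNth l i) ^ s) ^ (p / s)) ^ (1 / p)) ^
        (1 / (n + 1) : ℝ) := by
  have hs : 0 < s := hp.trans_le hps
  have hn : (0 : ℝ) < n + 1 := by positivity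
  have hρ_pos : 0 < ρ := (div_pos_iff_of_pos_left hn).1 (hρ ▸ by positivity)
  have exponents : ∀ c : Fin (n + 1),
      ∑ j, 1 / (n + 1 : ℝ) / update (fun _ => p) j s c = 1 / ρ := by
    intro c
    rw [← add_sum_erase _ _ (mem_univ c), update_self, sum_congr rfl fun j hj => by
      rw [update_of_ne (ne_of_mem_erase hj).symm]]
    rw [sum_const, card_erase_of_mem (mem_univ c), card_univ, Fintype.card_fin,
      Nat.add_sub_cancel, nsmul_eq_mul]
    have split : 1 / (n + 1 : ℝ) / s + n * (1 / (n + 1) / p) = (1 / s + n / p) / (n + 1) := by ring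
    rw [split, ← hρ]
    field_simp
  have holder := mixedNorm_prod_rpow_le (fun _ => by positivity) (fun _ => hρ_pos)
    (q := fun j => update (fun _ => p) j s)
    (fun j c => by rw [update_apply]; split_ifs <;> assumption) exponents (fun _ => f)
  simp only [prod_const_rpow_one_div, mixedNorm_const hρ_pos.ne'] at holder
  refine holder.trans (prod_le_prod' fun j _ => ?_)
  gcongr
  exact mixedNorm_update_le hp hps j f

theorem lp_norm_le_of_forall_mixed_lp_norm_le {E : Type*} [SeminormedAddCommGroup E] {n : ℕ}
    {p s ρ : ℝ} (hp : 0 < p) (hps : p ≤ s) (hρ : (n + 1) / ρ = 1 / s + n / p)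
    {c : (Fin (n + 1) → X) → E} {B : ℝ} (hc : ∀ j : Fin (n + 1),
      (∑ i : Fin n → X, (∑ l, ‖c (j.insertNth l i)‖ ^ s) ^ (p / s)) ^ (1 / p) ≤ B) :
    (∑ i, ‖c i‖ ^ ρ) ^ (1 / ρ) ≤ B := by
  lift B to ℝ≥0 using le_trans (by positivity) (hc 0)
  have hc' (j : Fin (n + 1)) :
      (∑ i : Fin n → X, (∑ l, ‖c (j.insertNth l i)‖₊ ^ s) ^ (p / s)) ^ (1 / p) ≤ B := by
    rw [← NNReal.coe_le_coe]
    simpa only [NNReal.coe_rpow, NNReal.coe_sum, coe_nnnorm] using hc j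
  have interpolation : (∑ i, ‖c i‖₊ ^ ρ) ^ (1 / ρ) ≤ B :=
    calc (∑ i, ‖c i‖₊ ^ ρ) ^ (1 / ρ)
        ≤ ∏ _j : Fin (n + 1), B ^ (1 / (n + 1) : ℝ) :=
          (lp_le_prod_mixed_lp hp hps hρ _).trans
            (prod_le_prod' fun j _ => NNReal.rpow_le_rpow (hc' j) (by positivity))
      _ = B := prod_const_rpow_one_div B
  rw [← NNReal.coe_le_coe] at interpolation
  simpa only [NNReal.coe_rpow, NNReal.coe_sum, coe_nnnorm] using interpolation

end MixedNorms

section RootSums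

open ZMod (stdAddChar)

variable {q : ℕ} [NeZero q] {N : ℕ}

theorem expect_pi_fin_succ {X M : Type*} [Fintype X] [AddCommMonoid M] [Module ℚ≥0 M]
    (g : (Fin (N + 1) → X) → M) : 𝔼 i, g i = 𝔼 x, 𝔼 i, g (Fin.cons x i) :=
  (Fintype.expect_equiv (Fin.consEquiv fun _ => X) _ g fun _ => rfl).symm.trans
    (expect_product univ univ _)

theorem expect_stdAddChar_pow_mul_conj {i j : ℕ} (hi : i < q) (hj : j < q) :
    𝔼 c : ZMod q, stdAddChar c ^ i * conj (stdAddChar c ^ j) = if i = j then (1 : ℂ) else 0 := by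
  have single_char : ∀ c : ZMod q,
      stdAddChar c ^ i * conj (stdAddChar c ^ j) = stdAddChar (c * (i - j : ZMod q)) := by
    intro c
    rw [← AddChar.map_nsmul_eq_pow, ← AddChar.map_nsmul_eq_pow, ← AddChar.map_neg_eq_conj,
      ← AddChar.map_add_eq_mul]
    congr 1
    simp only [nsmul_eq_mul]
    ring
  have cast_eq_iff : (i - j : ZMod q) = 0 ↔ i = j := by
    rw [sub_eq_zero, ZMod.natCast_eq_natCast_iff', Nat.mod_eq_of_lt hi, Nat.mod_eq_of_lt hj]
  simp only [single_char, Fintype.expect_eq_sum_div_card,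
    AddChar.sum_mulShift _ (ZMod.isPrimitive_stdAddChar q), cast_eq_iff, ZMod.card]
  split_ifs <;> simp [NeZero.ne q]

theorem expect_norm_sq_sum_stdAddChar_pow {k : ℕ} (hk : k ≤ q) (a : ℕ → ℂ) :
    𝔼 c : ZMod q, ‖∑ j ∈ range k, stdAddChar c ^ j * a j‖ ^ 2 = ∑ j ∈ range k, ‖a j‖ ^ 2 := by
  have lt_q : ∀ j ∈ range k, j < q := fun j hj => (mem_range.1 hj).trans_le hk
  rw [← Complex.ofReal_inj, Complex.ofReal_expect]
  push_cast
  simp only [← Complex.mul_conj', map_sum, sum_mul_sum, expect_sum_comm, map_mul (starRingEnd ℂ),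
    mul_mul_mul_comm _ (a _) _ (conj (a _)), ← expect_mul]
  refine sum_congr rfl fun i hi => ?_
  rw [sum_eq_single_of_mem i hi fun j hj hji => by
    rw [expect_stdAddChar_pow_mul_conj (lt_q i hi) (lt_q j hj), if_neg hji.symm, zero_mul],
    expect_stdAddChar_pow_mul_conj (lt_q i hi) (lt_q i hi), if_pos rfl, one_mul]

/-- The sum `∑ l, b l * ζ l` for the `q`-th roots of unity `ζ l = exp (2πi ω l / q)`, a
Steinhaus-type random sum when `ω` is uniformly distributed. -/
noncomputable def rootSum (b : Fin N → ℂ) (ω : Fin N → ZMod q) : ℂ :=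
  ∑ l, b l * stdAddChar (ω l)

/-- The moment of order `2 * k` of `rootSum b`, as an average over all choices of roots. -/
noncomputable def evenMoment (q : ℕ) [NeZero q] (b : Fin N → ℂ) (k : ℕ) : ℝ :=
  𝔼 ω : Fin N → ZMod q, (‖rootSum b ω‖ ^ 2) ^ k

theorem evenMoment_zero_right (b : Fin N → ℂ) : evenMoment q b 0 = 1 := by
  simp [evenMoment]

theorem evenMoment_zero_left (b : Fin 0 → ℂ) {k : ℕ} (hk : k ≠ 0) : evenMoment q b k = 0 := by
  simp [evenMoment, rootSum, hk]

theorem rootSum_cons (b : Fin (N + 1) → ℂ) (c : ZMod q) (ω : Fin N → ZMod q) :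
    rootSum b (Fin.cons c ω) = stdAddChar c * b 0 + rootSum (Fin.tail b) ω := by
  simp only [rootSum, Fin.sum_univ_succ, Fin.cons_zero, Fin.cons_succ, Fin.tail, mul_comm (b 0)]

theorem evenMoment_succ (b : Fin (N + 1) → ℂ) {k : ℕ} (hk : k < q) :
    evenMoment q b k = ∑ j ∈ range (k + 1),
      (k.choose j : ℝ) ^ 2 * (‖b 0‖ ^ 2) ^ j * evenMoment q (Fin.tail b) (k - j) := by
  have conditional_moment : ∀ ω : Fin N → ZMod q,
      𝔼 c : ZMod q, (‖rootSum b (Fin.cons c ω)‖ ^ 2) ^ k = ∑ j ∈ range (k + 1),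
        (k.choose j : ℝ) ^ 2 * (‖b 0‖ ^ 2) ^ j * (‖rootSum (Fin.tail b) ω‖ ^ 2) ^ (k - j) := by
    intro ω
    have binomial : ∀ c : ZMod q, (‖rootSum b (Fin.cons c ω)‖ ^ 2) ^ k =
        ‖∑ j ∈ range (k + 1), stdAddChar c ^ j *
          (b 0 ^ j * rootSum (Fin.tail b) ω ^ (k - j) * k.choose j)‖ ^ 2 := by
      intro c
      rw [pow_right_comm, ← norm_pow, rootSum_cons, add_pow]
      simp only [mul_pow, mul_assoc]
    simp only [binomial, expect_norm_sq_sum_stdAddChar_pow (Nat.succ_le_of_lt hk)]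
    refine sum_congr rfl fun j _ => ?_
    simp only [norm_mul, norm_pow, Complex.norm_natCast]
    ring
  rw [evenMoment, expect_pi_fin_succ, expect_comm]
  simp only [conditional_moment, expect_sum_comm, ← mul_expect, evenMoment]

theorem evenMoment_one (hq : 1 < q) (b : Fin N → ℂ) : evenMoment q b 1 = ∑ l, ‖b l‖ ^ 2 := by
  induction N with
  | zero => simp [evenMoment_zero_left]
  | succ N ih =>
    simp only [evenMoment_succ b hq, sum_range_succ, sum_range_zero, Nat.sub_self, tsub_zero,
      evenMoment_zero_right, ih, Fin.sum_univ_succ, Fin.tail]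
    norm_num
    ring

theorem evenMoment_two (hq : 2 < q) (b : Fin N → ℂ) :
    evenMoment q b 2 = 2 * (∑ l, ‖b l‖ ^ 2) ^ 2 - ∑ l, (‖b l‖ ^ 2) ^ 2 := by
  induction N with
  | zero => simp [evenMoment_zero_left]
  | succ N ih =>
    simp only [evenMoment_succ b hq, sum_range_succ, sum_range_zero, Nat.sub_self, tsub_zero,
      evenMoment_zero_right, ih, evenMoment_one (by lia : 1 < q), Nat.reduceSub,
      Fin.sum_univ_succ, Fin.tail, Nat.choose]
    norm_num
    ring

theorem evenMoment_three (hq : 3 < q) (b : Fin N → ℂ) :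
    evenMoment q b 3 = 6 * (∑ l, ‖b l‖ ^ 2) ^ 3 -
      9 * (∑ l, ‖b l‖ ^ 2) * (∑ l, (‖b l‖ ^ 2) ^ 2) + 4 * ∑ l, (‖b l‖ ^ 2) ^ 3 := by
  induction N with
  | zero => simp [evenMoment_zero_left]
  | succ N ih =>
    simp only [evenMoment_succ b hq, sum_range_succ, sum_range_zero, Nat.sub_self, tsub_zero,
      evenMoment_zero_right, ih, evenMoment_one (by lia : 1 < q), evenMoment_two (by lia : 2 < q),
      Nat.reduceSub, Fin.sum_univ_succ, Fin.tail, Nat.choose]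
    norm_num
    ring

theorem evenMoment_four (hq : 4 < q) (b : Fin N → ℂ) :
    evenMoment q b 4 = 24 * (∑ l, ‖b l‖ ^ 2) ^ 4 -
      72 * (∑ l, ‖b l‖ ^ 2) ^ 2 * (∑ l, (‖b l‖ ^ 2) ^ 2) + 18 * (∑ l, (‖b l‖ ^ 2) ^ 2) ^ 2 +
      64 * (∑ l, ‖b l‖ ^ 2) * (∑ l, (‖b l‖ ^ 2) ^ 3) - 33 * ∑ l, (‖b l‖ ^ 2) ^ 4 := by
  induction N with
  | zero => simp [evenMoment_zero_left]
  | succ N ih =>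
    simp only [evenMoment_succ b hq, sum_range_succ, sum_range_zero, Nat.sub_self, tsub_zero,
      evenMoment_zero_right, ih, evenMoment_one (by lia : 1 < q), evenMoment_two (by lia : 2 < q),
      evenMoment_three (by lia : 3 < q), Nat.reduceSub, Fin.sum_univ_succ, Fin.tail, Nat.choose]
    norm_num
    ring

end RootSums

section PowerSums

variable {ι : Type*} [Fintype ι] {a : ι → ℝ}

theorem sq_sum_sq_le_sum_pow_three (ha : ∀ l, 0 ≤ a l) (ha_sum : ∑ l, a l = 1) :
    (∑ l, a l ^ 2) ^ 2 ≤ ∑ l, a l ^ 3 := by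
  simpa [ha_sum] using sum_sq_le_sum_mul_sum_of_sq_le_mul univ (fun l _ => ha l)
    (fun l _ => pow_nonneg (ha l) 3) (fun l _ => (show (a l ^ 2) ^ 2 = a l * a l ^ 3 by ring).le)

theorem sum_pow_succ_le_sum_pow (ha : ∀ l, 0 ≤ a l) (ha_sum : ∑ l, a l = 1) (k : ℕ) :
    ∑ l, a l ^ (k + 1) ≤ ∑ l, a l ^ k := by
  have ha_le_one (l : ι) : a l ≤ 1 := ha_sum ▸ single_le_sum (fun i _ => ha i) (mem_univ l)
  exact sum_le_sum fun l _ => pow_le_pow_of_le_one (ha l) (ha_le_one l) k.le_succ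

theorem two_mul_sum_pow_three_sub_le_sum_pow_four (c : ℝ) :
    2 * c * ∑ l, a l ^ 3 - c ^ 2 * ∑ l, a l ^ 2 ≤ ∑ l, a l ^ 4 := by
  rw [mul_sum, mul_sum, ← sum_sub_distrib]
  refine sum_le_sum fun l _ => ?_
  linear_combination sq_nonneg (a l * (a l - c))

end PowerSums

section ScalarInequalities

/-- The gap between `log` and its cubic majorant, which has a double zero at `1` and a positive
local minimum at `4`. -/
noncomputable def cubicLogGap (u : ℝ) : ℝ :=
  (u ^ 3 - 11 * u ^ 2 + 47 * u - 37) / 28 - log u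

theorem hasDerivAt_cubicLogGap {u : ℝ} (hu : 0 < u) :
    HasDerivAt cubicLogGap ((u - 1) * (3 * u - 7) * (u - 4) / (28 * u)) u := by
  have cubic := ((((hasDerivAt_pow 3 u).sub ((hasDerivAt_pow 2 u).const_mul 11)).add
    ((hasDerivAt_id u).const_mul 47)).sub_const 37).div_const 28
  refine (cubic.sub (hasDerivAt_log hu.ne')).congr_deriv ?_
  field_simp
  norm_num
  ring

theorem continuousAt_cubicLogGap {u : ℝ} (hu : 0 < u) : ContinuousAt cubicLogGap u :=
  (hasDerivAt_cubicLogGap hu).continuousAt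

theorem differentiableOn_cubicLogGap {s : Set ℝ} (hs : ∀ u ∈ s, 0 < u) :
    DifferentiableOn ℝ cubicLogGap s := fun u hu =>
  (hasDerivAt_cubicLogGap (hs u hu)).differentiableAt.differentiableWithinAt

theorem cubicLogGap_nonneg_of_le {u : ℝ} (hu : 0 < u) (hu_le : u ≤ 7 / 3) :
    0 ≤ cubicLogGap u := by
  have gap_one : cubicLogGap 1 = 0 := by norm_num [cubicLogGap]
  have min_at_one : IsMinOn cubicLogGap (Set.Ioc 0 (7 / 3)) 1 := by
    refine isMinOn_Ioc_of_deriv (continuousAt_cubicLogGap one_pos)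
      (continuousAt_cubicLogGap (by norm_num)) (differentiableOn_cubicLogGap fun v hv => hv.1)
      (differentiableOn_cubicLogGap fun v hv => one_pos.trans hv.1) ?_ ?_ <;>
    rintro v ⟨hv, hv'⟩ <;> rw [(hasDerivAt_cubicLogGap (by linarith)).deriv]
    · exact div_nonpos_of_nonpos_of_nonneg (mul_nonpos_of_nonneg_of_nonpos
        (mul_nonneg_of_nonpos_of_nonpos (by linarith) (by linarith)) (by linarith)) (by linarith)
    · exact div_nonneg (mul_nonneg_of_nonpos_of_nonpos
        (mul_nonpos_of_nonneg_of_nonpos (by linarith) (by linarith)) (by linarith)) (by linarith)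
  exact gap_one ▸ min_at_one ⟨hu, hu_le⟩

theorem cubicLogGap_nonneg_of_ge {u : ℝ} (hu : 7 / 3 ≤ u) : 0 ≤ cubicLogGap u := by
  have gap_four : 0 ≤ cubicLogGap 4 := by
    have log_four : log 4 = 2 * log 2 := by
      rw [show (4 : ℝ) = 2 ^ 2 by norm_num, log_pow, Nat.cast_ofNat]
    norm_num [cubicLogGap, log_four]
    linarith [log_two_lt_d9]
  have min_at_four : IsMinOn cubicLogGap (Set.Ici (7 / 3)) 4 := by
    refine isMinOn_Ici_of_deriv (continuousAt_cubicLogGap (by norm_num))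
      (continuousAt_cubicLogGap (by norm_num))
      (differentiableOn_cubicLogGap fun v hv => by linarith [hv.1])
      (differentiableOn_cubicLogGap fun v hv => four_pos.trans hv) ?_ ?_
    · rintro v ⟨hv, hv'⟩
      rw [(hasDerivAt_cubicLogGap (by linarith)).deriv]
      exact div_nonpos_of_nonpos_of_nonneg (mul_nonpos_of_nonneg_of_nonpos
        (mul_nonneg (by linarith) (by linarith)) (by linarith)) (by linarith)
    · rintro v (hv : 4 < v)
      rw [(hasDerivAt_cubicLogGap (by linarith)).deriv]
      exact div_nonneg (mul_nonneg (mul_nonneg (by linarith) (by linarith)) (by linarith))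
        (by linarith)
  exact gap_four.trans (min_at_four hu)

theorem log_le_cubic {u : ℝ} (hu : 0 < u) :
    log u ≤ (u ^ 3 - 11 * u ^ 2 + 47 * u - 37) / 28 :=
  sub_nonneg.1 ((le_total u (7 / 3)).elim (cubicLogGap_nonneg_of_le hu) cubicLogGap_nonneg_of_ge)

-- The quartic interpolates `√t` at `0` and, to second order, at `1` and `4`.
theorem quartic_le_sqrt {t : ℝ} (ht : 0 ≤ t) :
    (740 * t - 411 * t ^ 2 + 114 * t ^ 3 - 11 * t ^ 4) / 432 ≤ √t := by
  obtain ⟨v, hv, rfl⟩ : ∃ v, 0 ≤ v ∧ t = v ^ 2 := ⟨√t, sqrt_nonneg t, (sq_sqrt ht).symm⟩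
  rw [sqrt_sq hv]
  have factored : 0 ≤ v * ((v - 1) * (v - 2)) ^ 2 * (11 * v ^ 3 + 66 * v ^ 2 + 139 * v + 108) := by
    positivity
  linear_combination factored / 432

theorem exp_neg_mul_entropy_le {ι : Type*} [Fintype ι] [Nonempty ι] {f : ι → ℝ} (hf : ∀ i, 0 ≤ f i)
    (hf_mean : 𝔼 i, f i = 1) (κ : ℝ) :
    exp (-(κ * 𝔼 i, f i * log (f i))) ≤ 𝔼 i, f i ^ (1 - κ) := by
  set m := -(κ * 𝔼 i, f i * log (f i)) with hm
  have tangent (i : ι) : exp m * (f i - κ * (f i * log (f i)) - m * f i) ≤ f i ^ (1 - κ) := by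
    rcases (hf i).eq_or_lt with h | h
    · rw [← h]
      simp [rpow_nonneg]
    · have expand : f i ^ (1 - κ) = exp m * (f i * exp (-(κ * log (f i)) - m)) := by
        rw [rpow_sub h, rpow_one, rpow_def_of_pos h, mul_left_comm, ← exp_add,
          add_sub_cancel, exp_neg, mul_comm κ, div_eq_mul_inv]
      rw [expand]
      gcongr
      linear_combination f i * add_one_le_exp (-(κ * log (f i)) - m)
  calc exp m = 𝔼 i, exp m * (f i - κ * (f i * log (f i)) - m * f i) := by
        simp only [← mul_expect, expect_sub_distrib, hf_mean]
        linear_combination exp m * hm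
    _ ≤ _ := expect_le_expect fun i _ => tangent i

end ScalarInequalities

section Khinchine

variable {q : ℕ} [NeZero q] {N : ℕ}

theorem expect_quartic_rootSum (hq : 4 < q) {b : Fin N → ℂ} (hb : ∑ l, ‖b l‖ ^ 2 = 1)
    (c₁ c₂ c₃ c₄ : ℝ) :
    𝔼 ω : Fin N → ZMod q, (c₁ * ‖rootSum b ω‖ ^ 2 + c₂ * (‖rootSum b ω‖ ^ 2) ^ 2 +
      c₃ * (‖rootSum b ω‖ ^ 2) ^ 3 + c₄ * (‖rootSum b ω‖ ^ 2) ^ 4) =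
    c₁ + c₂ * (2 - ∑ l, (‖b l‖ ^ 2) ^ 2) +
      c₃ * (6 - 9 * ∑ l, (‖b l‖ ^ 2) ^ 2 + 4 * ∑ l, (‖b l‖ ^ 2) ^ 3) +
      c₄ * (24 - 72 * ∑ l, (‖b l‖ ^ 2) ^ 2 + 18 * (∑ l, (‖b l‖ ^ 2) ^ 2) ^ 2 +
        64 * ∑ l, (‖b l‖ ^ 2) ^ 3 - 33 * ∑ l, (‖b l‖ ^ 2) ^ 4) := by
  have moment_one := evenMoment_one (by lia : 1 < q) b
  have moment_two := evenMoment_two (by lia : 2 < q) b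
  have moment_three := evenMoment_three (by lia : 3 < q) b
  have moment_four := evenMoment_four hq b
  simp only [evenMoment, hb, pow_one] at moment_one moment_two moment_three moment_four
  simp only [expect_add_distrib, ← mul_expect, moment_one, moment_two, moment_three, moment_four]
  ring

-- Rescaling `t` by `3 / 4` is close to optimal when `t` has the moments `k!`, which is the limiting
-- case of many small coefficients.
theorem mul_log_le_quartic {t : ℝ} (ht : 0 ≤ t) :
    t * log t ≤ (5 / 12 * log 2 - 37 / 28) * t + 141 / 112 * t ^ 2 + -99 / 448 * t ^ 3 +
      27 / 1792 * t ^ 4 := by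
  rcases ht.eq_or_lt with rfl | ht
  · simp
  have log_four_thirds : log (4 / 3) ≤ 5 / 12 * log 2 := by
    have powers : log ((4 / 3) ^ 12) ≤ log (2 ^ 5) := log_le_log (by norm_num) (by norm_num)
    rw [log_pow, log_pow] at powers
    push_cast at powers
    linarith
  have rescale : log t = log (4 / 3) + log (3 / 4 * t) := by
    rw [← log_mul (by norm_num) (by positivity)]
    ring_nf
  have cubic := log_le_cubic (u := 3 / 4 * t) (by positivity)
  rw [rescale]
  linear_combination t * (log_four_thirds + cubic)

theorem expect_entropy_rootSum_le (hq : 4 < q) {b : Fin N → ℂ} (hb : ∑ l, ‖b l‖ ^ 2 = 1) :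
    𝔼 ω : Fin N → ZMod q, ‖rootSum b ω‖ ^ 2 * log (‖rootSum b ω‖ ^ 2) ≤ 0.521 := by
  have ha (l : Fin N) : 0 ≤ ‖b l‖ ^ 2 := by positivity
  have squares_le_cubes := sq_sum_sq_le_sum_pow_three ha hb
  have cubes_le_squares : ∑ l, (‖b l‖ ^ 2) ^ 3 ≤ ∑ l, (‖b l‖ ^ 2) ^ 2 :=
    sum_pow_succ_le_sum_pow ha hb 2
  have squares_nonneg : 0 ≤ ∑ l, (‖b l‖ ^ 2) ^ 2 := by positivity
  have fourths_nonneg : 0 ≤ ∑ l, (‖b l‖ ^ 2) ^ 4 := by positivity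
  refine (expect_le_expect fun ω _ => mul_log_le_quartic (by positivity)).trans ?_
  rw [expect_quartic_rootSum hq hb]
  linarith [log_two_lt_d9]

theorem le_expect_norm_rootSum (hq : 4 < q) {b : Fin N → ℂ} (hb : ∑ l, ‖b l‖ ^ 2 = 1) :
    0.794 ≤ 𝔼 ω : Fin N → ZMod q, ‖rootSum b ω‖ := by
  have ha (l : Fin N) : 0 ≤ ‖b l‖ ^ 2 := by positivity
  have squares_le_cubes := sq_sum_sq_le_sum_pow_three ha hb
  have squares_nonneg : 0 ≤ ∑ l, (‖b l‖ ^ 2) ^ 2 := by positivity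
  have cubes_nonneg : 0 ≤ ∑ l, (‖b l‖ ^ 2) ^ 3 := by positivity
  have fourths_ge := two_mul_sum_pow_three_sub_le_sum_pow_four (a := fun l => ‖b l‖ ^ 2) (1 / 2)
  -- As for the entropy, the rescaling by `36 / 49` is tuned to the limiting moments `k!`.
  have quartic {v : ℝ} (hv : 0 ≤ v) :
      185 / 126 * v ^ 2 + -411 / 686 * (v ^ 2) ^ 2 + 2052 / 16807 * (v ^ 2) ^ 3 +
        -7128 / 823543 * (v ^ 2) ^ 4 ≤ v := by
    have rescale : √(36 / 49 * v ^ 2) = 6 / 7 * v := by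
      rw [show 36 / 49 * v ^ 2 = (6 / 7 * v) ^ 2 by ring, sqrt_sq (by positivity)]
    have := quartic_le_sqrt (t := 36 / 49 * v ^ 2) (by positivity)
    rw [rescale] at this
    linear_combination 7 / 6 * this
  refine le_trans ?_ (expect_le_expect fun ω _ => quartic (norm_nonneg _))
  rw [expect_quartic_rootSum hq hb]
  linarith

/-- `A` is an admissible constant in the Khinchine inequality `‖b‖₂ ≤ A ‖∑ l, b l ζ l‖_p` for
independent uniform `q`-th roots of unity `ζ l`, written in the root-free form
`‖b‖₂ ^ p ≤ A ^ p 𝔼 |∑ l, b l ζ l| ^ p`. -/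
def IsKhinchineConst (q : ℕ) [NeZero q] (p A : ℝ) : Prop :=
  0 ≤ A ∧ ∀ (N : ℕ) (b : Fin N → ℂ),
    (∑ l, ‖b l‖ ^ 2) ^ (p / 2) ≤ A ^ p * 𝔼 ω : Fin N → ZMod q, ‖rootSum b ω‖ ^ p

theorem rootSum_smul (c : ℂ) (b : Fin N → ℂ) (ω : Fin N → ZMod q) :
    rootSum (c • b) ω = c * rootSum b ω := by
  simp [rootSum, mul_sum, mul_assoc]

theorem isKhinchineConst_of_normalized {p A : ℝ} (hp : 0 < p) (hA : 0 ≤ A)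
    (h : ∀ (N : ℕ) (b : Fin N → ℂ), ∑ l, ‖b l‖ ^ 2 = 1 →
      1 ≤ A ^ p * 𝔼 ω : Fin N → ZMod q, ‖rootSum b ω‖ ^ p) :
    IsKhinchineConst q p A := by
  refine ⟨hA, fun N b => ?_⟩
  obtain ⟨T, hT, sum_eq⟩ : ∃ T, 0 ≤ T ∧ ∑ l, ‖b l‖ ^ 2 = T ^ 2 :=
    ⟨√(∑ l, ‖b l‖ ^ 2), sqrt_nonneg _, (sq_sqrt (by positivity)).symm⟩
  have norm_pow_eq : (T ^ 2) ^ (p / 2) = T ^ p := by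
    rw [← rpow_natCast_mul hT, Nat.cast_ofNat, mul_div_cancel₀ p two_ne_zero]
  rw [sum_eq, norm_pow_eq]
  rcases hT.eq_or_lt with rfl | hT
  · rw [zero_rpow hp.ne']
    exact mul_nonneg (rpow_nonneg hA p) (expect_nonneg fun ω _ => rpow_nonneg (norm_nonneg _) p)
  · have normalized := h N ((T⁻¹ : ℂ) • b) (by
      simp [mul_pow, ← mul_sum, sum_eq, hT.ne'])
    have scaled (ω : Fin N → ZMod q) :
        ‖rootSum ((T⁻¹ : ℂ) • b) ω‖ ^ p = (T ^ p)⁻¹ * ‖rootSum b ω‖ ^ p := by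
      rw [rootSum_smul, norm_mul, mul_rpow (norm_nonneg _) (norm_nonneg _), norm_inv,
        Complex.norm_of_nonneg hT.le, inv_rpow hT.le]
    simp only [scaled, ← mul_expect] at normalized
    rwa [mul_left_comm, ← div_eq_inv_mul, one_le_div (rpow_pos_of_pos hT p)] at normalized

theorem isKhinchineConst_one (hq : 4 < q) : IsKhinchineConst q 1 (2 ^ (1 / 3 : ℝ)) := by
  refine isKhinchineConst_of_normalized one_pos (by positivity) fun N b hb => ?_
  have cube_root_two : 1 / 0.794 ≤ (2 : ℝ) ^ (1 / 3 : ℝ) := by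
    rw [one_div (3 : ℝ), le_rpow_inv_iff_of_pos (by norm_num) zero_le_two three_pos]
    norm_num
  simp only [rpow_one]
  calc (1 : ℝ) = 1 / 0.794 * 0.794 := by norm_num
    _ ≤ _ := mul_le_mul cube_root_two (le_expect_norm_rootSum hq hb) (by norm_num) (by positivity)

theorem isKhinchineConst_exp (hq : 4 < q) {p : ℝ} (hp : 0 < p) (hp_two : p ≤ 2) :
    IsKhinchineConst q p (exp (0.521 * (1 / p - 1 / 2))) := by
  refine isKhinchineConst_of_normalized hp (exp_pos _).le fun N b hb => ?_
  have mean_one : 𝔼 ω : Fin N → ZMod q, ‖rootSum b ω‖ ^ 2 = 1 := by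
    simpa only [evenMoment, pow_one, hb] using evenMoment_one (by lia : 1 < q) b
  have moment (ω : Fin N → ZMod q) :
      (‖rootSum b ω‖ ^ 2) ^ (1 - (1 - p / 2)) = ‖rootSum b ω‖ ^ p := by
    rw [← rpow_natCast_mul (norm_nonneg _)]
    congr 1
    push_cast
    ring
  have jensen := exp_neg_mul_entropy_le (fun ω : Fin N → ZMod q => sq_nonneg ‖rootSum b ω‖)
    mean_one (1 - p / 2)
  simp only [moment] at jensen
  calc 1 = exp (0.521 * (1 - p / 2)) * exp (-((1 - p / 2) * 0.521)) := by
        rw [← exp_add, mul_comm, add_neg_cancel, exp_zero]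
    _ ≤ exp (0.521 * (1 / p - 1 / 2)) ^ p * 𝔼 ω : Fin N → ZMod q, ‖rootSum b ω‖ ^ p := by
        rw [← exp_mul]
        refine mul_le_mul (exp_le_exp.2 (by field_simp; rfl)) (le_trans ?_ jensen) (exp_pos _).le
          (exp_pos _).le
        gcongr
        · linarith
        · exact expect_entropy_rootSum_le hq hb

end Khinchine

section BohnenblustHille

variable {n N : ℕ}

/-- The coefficient `U (e_{i 0}, …, e_{i (n - 1)})` of the form `U` on the canonical basis. -/
noncomputable def formCoeff (U : ContinuousMultilinearMap ℂ (fun _ : Fin n => (Fin N → ℂ)) ℂ)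
    (i : Fin n → Fin N) : ℂ :=
  U fun k => Pi.single (i k) 1

theorem BHcomplex_eq (U : ContinuousMultilinearMap ℂ (fun _ : Fin n => (Fin N → ℂ)) ℂ) :
    BHcomplex n N U = (∑ i, ‖formCoeff U i‖ ^ ((2 * n : ℝ) / (n + 1))) ^
      (1 / ((2 * n : ℝ) / (n + 1))) := by
  rw [one_div_div]
  rfl

theorem norm_formCoeff_le (U : ContinuousMultilinearMap ℂ (fun _ : Fin n => (Fin N → ℂ)) ℂ)
    (i : Fin n → Fin N) : ‖formCoeff U i‖ ≤ ‖U‖ := by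
  simpa [formCoeff, Pi.norm_single] using U.le_opNorm fun k => Pi.single (i k) (1 : ℂ)

theorem formCoeff_curryMid (U : ContinuousMultilinearMap ℂ (fun _ : Fin (n + 1) => (Fin N → ℂ)) ℂ)
    (j : Fin (n + 1)) (x : Fin N → ℂ) (i : Fin n → Fin N) :
    formCoeff (U.curryMid j x) i = ∑ l, x l * formCoeff U (j.insertNth l i) := by
  have basis_insertNth (l : Fin N) :
      (j.insertNth (Pi.single l 1) fun k => Pi.single (i k) 1 : Fin (n + 1) → Fin N → ℂ) =
        fun k => Pi.single ((j.insertNth l i : Fin (n + 1) → Fin N) k) 1 := by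
    rw [Fin.insertNth_eq_iff]
    simp [funext_iff, Fin.removeNth]
  conv_lhs => rw [pi_eq_sum_univ' x, map_sum]
  simp [formCoeff, basis_insertNth, ContinuousMultilinearMap.curryMid_apply]

theorem norm_curryMid_apply_le
    (U : ContinuousMultilinearMap ℂ (fun _ : Fin (n + 1) => (Fin N → ℂ)) ℂ) (j : Fin (n + 1))
    {x : Fin N → ℂ} (hx : ∀ l, ‖x l‖ ≤ 1) : ‖U.curryMid j x‖ ≤ ‖U‖ := by
  rw [← U.norm_curryMid j]
  exact (U.curryMid j).le_of_opNorm_le_of_le le_rfl ((pi_norm_le_iff_of_nonneg zero_le_one).2 hx)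
    |>.trans_eq (mul_one _)

theorem BHcomplex_one_le (U : ContinuousMultilinearMap ℂ (fun _ : Fin 1 => (Fin N → ℂ)) ℂ) :
    BHcomplex 1 N U ≤ ‖U‖ := by
  choose x norm_x hx using fun l : Fin N =>
    RCLike.exists_norm_eq_mul_self (formCoeff U (Fin.insertNth 0 l default))
  have norm_sum : formCoeff (U.curryMid 0 x) default =
      ((∑ l, ‖formCoeff U (Fin.insertNth 0 l default)‖ : ℝ) : ℂ) := by
    rw [formCoeff_curryMid]
    push_cast
    exact sum_congr rfl fun l _ => (hx l).symm
  calc BHcomplex 1 N U = ∑ l, ‖formCoeff U (Fin.insertNth 0 l default)‖ := by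
        have exponent_eq : (2 * (1 : ℕ) / ((1 : ℕ) + 1) : ℝ) = 1 := by norm_num
        rw [BHcomplex_eq, exponent_eq, one_div_one, rpow_one, sum_pi_fin_succ]
        simp only [rpow_one, Fintype.sum_unique, Fin.insertNth_zero']
    _ ≤ ‖formCoeff (U.curryMid 0 x) default‖ := by
        rw [norm_sum, Complex.norm_real]
        exact le_norm_self _
    _ ≤ ‖U‖ := (norm_formCoeff_le _ _).trans (norm_curryMid_apply_le U 0 fun l => (norm_x l).le)

theorem lp_formCoeff_slice_le {q : ℕ} [NeZero q] {p A B : ℝ} (hp : 0 < p)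
    (hA : IsKhinchineConst q p A)
    (U : ContinuousMultilinearMap ℂ (fun _ : Fin (n + 1) => (Fin N → ℂ)) ℂ) (j : Fin (n + 1))
    (hB : ∀ x : Fin N → ℂ, (∀ l, ‖x l‖ ≤ 1) →
      (∑ i, ‖formCoeff (U.curryMid j x) i‖ ^ p) ^ (1 / p) ≤ B) :
    (∑ i : Fin n → Fin N, (∑ l, ‖formCoeff U (j.insertNth l i)‖ ^ (2 : ℝ)) ^ (p / 2)) ^ (1 / p) ≤
      A * B := by
  obtain ⟨A_nonneg, khinchine⟩ := hA
  have B_nonneg : 0 ≤ B := le_trans (by positivity) (hB 0 (by simp))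
  let x (ω : Fin N → ZMod q) (l : Fin N) : ℂ := ZMod.stdAddChar (ω l)
  let b (i : Fin n → Fin N) (l : Fin N) : ℂ := formCoeff U (j.insertNth l i)
  have rootSum_eq (ω : Fin N → ZMod q) (i : Fin n → Fin N) :
      rootSum (b i) ω = formCoeff (U.curryMid j (x ω)) i := by
    simp only [rootSum, formCoeff_curryMid, x, b, mul_comm]
  have slice_le (ω : Fin N → ZMod q) : ∑ i, ‖rootSum (b i) ω‖ ^ p ≤ B ^ p := by
    have := hB (x ω) fun l => (AddChar.norm_apply _ _).le
    rw [one_div, rpow_inv_le_iff_of_pos (by positivity) B_nonneg hp] at this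
    simpa only [rootSum_eq] using this
  rw [one_div, rpow_inv_le_iff_of_pos (by positivity) (by positivity) hp,
    mul_rpow A_nonneg B_nonneg]
  simp only [rpow_two]
  calc ∑ i, (∑ l, ‖b i l‖ ^ 2) ^ (p / 2)
      ≤ ∑ i, A ^ p * 𝔼 ω : Fin N → ZMod q, ‖rootSum (b i) ω‖ ^ p :=
        sum_le_sum fun i _ => khinchine N (b i)
    _ = A ^ p * 𝔼 ω : Fin N → ZMod q, ∑ i, ‖rootSum (b i) ω‖ ^ p := by
        rw [← mul_sum, expect_sum_comm]
    _ ≤ A ^ p * B ^ p := by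
        gcongr
        exact expect_le univ_nonempty fun ω _ => slice_le ω

theorem BHcomplex_succ_le {q : ℕ} [NeZero q] {A C : ℝ} (hn : 1 ≤ n)
    (hA : IsKhinchineConst q ((2 * n : ℝ) / (n + 1)) A) (hC : 0 ≤ C)
    (hBH : ∀ V : ContinuousMultilinearMap ℂ (fun _ : Fin n => (Fin N → ℂ)) ℂ,
      BHcomplex n N V ≤ C * ‖V‖)
    (U : ContinuousMultilinearMap ℂ (fun _ : Fin (n + 1) => (Fin N → ℂ)) ℂ) :
    BHcomplex (n + 1) N U ≤ A * (C * ‖U‖) := by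
  have : (0 : ℝ) < n := by exact_mod_cast hn
  have exponent_pos : (0 : ℝ) < 2 * n / (n + 1) := by positivity
  have exponent_le_two : (2 * n / (n + 1) : ℝ) ≤ 2 := by
    rw [div_le_iff₀ (by positivity)]
    linarith
  rw [BHcomplex_eq]
  refine lp_norm_le_of_forall_mixed_lp_norm_le exponent_pos exponent_le_two ?_ fun j =>
    lp_formCoeff_slice_le exponent_pos hA U j fun x hx => ?_
  · push_cast
    field_simp
    ring
  · rw [← BHcomplex_eq]
    exact (hBH _).trans (mul_le_mul_of_nonneg_left (norm_curryMid_apply_le U j hx) hC)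

theorem BHcomplex_le_prod {q : ℕ} [NeZero q] {A : ℕ → ℝ}
    (hA : ∀ k : ℕ, 1 ≤ k → IsKhinchineConst q ((2 * k : ℝ) / (k + 1)) (A k)) (hn : 1 ≤ n)
    (U : ContinuousMultilinearMap ℂ (fun _ : Fin n => (Fin N → ℂ)) ℂ) :
    BHcomplex n N U ≤ (∏ k ∈ Ico 1 n, A k) * ‖U‖ := by
  induction n, hn using Nat.le_induction with
  | base => simpa using BHcomplex_one_le U
  | succ n hn ih =>
    rw [prod_Ico_succ_top hn, mul_comm (∏ k ∈ Ico 1 n, A k), mul_assoc]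
    exact BHcomplex_succ_le hn (hA n hn)
      (prod_nonneg fun k hk => (hA k (mem_Ico.1 hk).1).1) ih U

end BohnenblustHille

section Constants

theorem exp_div_le_rpow {a x : ℝ} (ha : 0 ≤ a) (hx : 1 < x) :
    exp (a / x) ≤ (x / (x - 1)) ^ a := by
  have ratio_pos : 0 < x / (x - 1) := div_pos (by linarith) (by linarith)
  have log_ge : 1 / x ≤ log (x / (x - 1)) := by
    refine le_of_eq_of_le ?_ (one_sub_inv_le_log_of_pos ratio_pos)
    field_simp
    ring
  rw [rpow_def_of_pos ratio_pos, div_eq_mul_one_div, mul_comm a]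
  gcongr

/-- The Khinchine constant that passes from `k`-linear to `(k + 1)`-linear forms, where the
exponent is `2 * k / (k + 1)`. -/
noncomputable def stepConst (k : ℕ) : ℝ :=
  if k = 1 then 2 ^ (1 / 3 : ℝ) else exp (0.2605 / k)

theorem isKhinchineConst_stepConst {q : ℕ} [NeZero q] (hq : 4 < q) {k : ℕ} (hk : 1 ≤ k) :
    IsKhinchineConst q ((2 * k : ℝ) / (k + 1)) (stepConst k) := by
  rcases eq_or_ne k 1 with rfl | hk_ne
  · convert isKhinchineConst_one hq using 1
    · norm_num
    · exact if_pos rfl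
  · have : (0 : ℝ) < k := by exact_mod_cast hk
    convert isKhinchineConst_exp hq (p := (2 * k : ℝ) / (k + 1)) (by positivity) ?_ using 1
    · rw [stepConst, if_neg hk_ne]
      congr 1
      field_simp
      ring
    · rw [div_le_iff₀ (by positivity)]
      linarith

theorem prod_stepConst_seventeen_le :
    ∏ k ∈ Ico 1 17, stepConst k ≤ 1.01089344604 * 16 ^ (0.304975 : ℝ) := by
  have prod_eq : ∏ k ∈ Ico 1 17, stepConst k =
      exp (log 2 / 3 + 0.2605 * ∑ k ∈ Ico (2 : ℕ) 17, 1 / (k : ℝ)) := by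
    rw [prod_eq_prod_Ico_succ_bot (by norm_num), exp_add, mul_sum, exp_sum]
    congr 1
    · rw [stepConst, if_pos rfl, rpow_def_of_pos two_pos, mul_one_div]
    · refine prod_congr rfl fun k hk => ?_
      rw [stepConst, if_neg (by have := (mem_Ico.1 hk).1; lia), mul_one_div]
  have bound_eq : (1.01089344604 : ℝ) * 16 ^ (0.304975 : ℝ) =
      exp (log 1.01089344604 + 4 * log 2 * 0.304975) := by
    rw [exp_add, exp_log (by norm_num), rpow_def_of_pos (by norm_num),
      show (16 : ℝ) = 2 ^ 4 by norm_num, log_pow, Nat.cast_ofNat]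
  have harmonic_le : ∑ k ∈ Ico (2 : ℕ) 17, 1 / (k : ℝ) ≤ 2.381 := by
    norm_num [sum_Ico_succ_top]
  have log_ge : 1 - (1.01089344604 : ℝ)⁻¹ ≤ log 1.01089344604 :=
    one_sub_inv_le_log_of_pos (by norm_num)
  have log_two_gt := log_two_gt_d9
  rw [prod_eq, bound_eq, exp_le_exp]
  norm_num at log_ge log_two_gt harmonic_le ⊢
  linarith

theorem prod_stepConst_le {n : ℕ} (hn : 17 ≤ n) :
    ∏ k ∈ Ico 1 n, stepConst k ≤ 1.01089344604 * ((n : ℝ) - 1) ^ (0.304975 : ℝ) := by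
  induction n, hn using Nat.le_induction with
  | base =>
    convert prod_stepConst_seventeen_le using 3
    norm_num
  | succ n hn ih =>
    have hn_real : (17 : ℝ) ≤ n := by exact_mod_cast hn
    have step_le : stepConst n ≤ ((n : ℝ) / (n - 1)) ^ (0.304975 : ℝ) :=
      calc stepConst n = exp (0.2605 / n) := if_neg (by lia)
        _ ≤ exp (0.304975 / n) := by gcongr; norm_num
        _ ≤ _ := exp_div_le_rpow (by norm_num) (by linarith)
    calc ∏ k ∈ Ico 1 (n + 1), stepConst k = (∏ k ∈ Ico 1 n, stepConst k) * stepConst n :=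
          prod_Ico_succ_top (by lia) _
      _ ≤ 1.01089344604 * ((n : ℝ) - 1) ^ (0.304975 : ℝ) *
            ((n : ℝ) / (n - 1)) ^ (0.304975 : ℝ) := by
          refine mul_le_mul ih step_le ?_ ?_
          · rw [stepConst, if_neg (by lia)]
            positivity
          · have : (0 : ℝ) ≤ n - 1 := by linarith
            positivity
      _ = 1.01089344604 * (((n + 1 : ℕ) : ℝ) - 1) ^ (0.304975 : ℝ) := by
          rw [mul_assoc, ← mul_rpow (by linarith) (div_nonneg (by linarith) (by linarith)),
            mul_div_cancel₀ _ (by linarith : (n : ℝ) - 1 ≠ 0), Nat.cast_succ, add_sub_cancel_right]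

end Constants

theorem stmt10 (n : ℕ) (hn : 2 ^ 4 < n) (N : ℕ) (hN : 0 < N)
    (U : ContinuousMultilinearMap ℂ (fun _ : Fin n => (Fin N → ℂ)) ℂ) :
    BHcomplex n N U ≤ 1.01089344604 * ((n : ℝ) - 1) ^ (0.304975 : ℝ) * ‖U‖ := by
  calc BHcomplex n N U ≤ (∏ k ∈ Ico 1 n, stepConst k) * ‖U‖ :=
        BHcomplex_le_prod (fun _ => isKhinchineConst_stepConst (q := 5) (by norm_num)) (by lia) U
    _ ≤ _ := mul_le_mul_of_nonneg_right (prod_stepConst_le hn) (norm_nonneg U)
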